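/- Let f, g ∈ L²(μ) be such that u·f and conj(w)·g are μ-integrable and both T f = w·μ[u·f|𝒜] and T* g = conj(u)·μ[conj(w)·g|𝒜] belong to L²(μ). Then the formal adjoint relation holds: ∫ (w·μ[u·f|𝒜])·conj(g) dμ = ∫ f·conj(conj(u)·μ[conj(w)·g|𝒜]) dμ. -/

import Mathlib

open MeasureTheory

/-!
Pulling the `m`-measurable factor out of a conditional expectation shows that both
`∫ 𝔼[a | m] * b` and `∫ a * 𝔼[b | m]` equal `∫ 𝔼[a | m] * 𝔼[b | m]`. With `a = u * f` and
`b = w * h`, this says that interchanging the two weights gives the transpose of a weighted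
conditional expectation for the bilinear pairing `∫ f * h`. The adjoint is obtained by taking
`h = conj g`, because conditional expectation commutes with conjugation.
-/

section CondExp

variable {X E F G : Type*} {m m₀ : MeasurableSpace X} {μ : Measure X}
  [NormedAddCommGroup E] [NormedSpace ℝ E] [CompleteSpace E]
  [NormedAddCommGroup F] [NormedSpace ℝ F] [CompleteSpace F]
  [NormedAddCommGroup G] [NormedSpace ℝ G] [CompleteSpace G]

theorem condExp_star [StarAddMonoid E] [ContinuousStar E] [StarModule ℝ E] (f : X → E) :
    μ[star f | m] =ᵐ[μ] star μ[f | m] := by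
  by_cases hf : Integrable f μ
  · exact ((starL' ℝ : E ≃L[ℝ] E).toContinuousLinearMap.comp_condExp_comm hf).symm
  · have hf_star : ¬ Integrable (star f) μ :=
      mt (starL' ℝ : E ≃L[ℝ] E).integrable_comp_iff.mp hf
    rw [condExp_of_not_integrable hf, condExp_of_not_integrable hf_star, star_zero]

theorem integral_bilin_condExp_left_eq_right (B : E →L[ℝ] F →L[ℝ] G) (hm : m ≤ m₀)
    [SigmaFinite (μ.trim hm)] {f : X → E} {g : X → F} (hf : Integrable f μ) (hg : Integrable g μ)
    (hfg_left : Integrable (fun x => B (μ[f | m] x) (g x)) μ)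
    (hfg_right : Integrable (fun x => B (f x) (μ[g | m] x)) μ) :
    ∫ x, B (μ[f | m] x) (g x) ∂μ = ∫ x, B (f x) (μ[g | m] x) ∂μ := by
  calc
    ∫ x, B (μ[f | m] x) (g x) ∂μ = ∫ x, μ[fun y => B (μ[f | m] y) (g y) | m] x ∂μ :=
      (integral_condExp hm).symm
    _ = ∫ x, B (μ[f | m] x) (μ[g | m] x) ∂μ := integral_congr_ae <|
      condExp_bilin_of_stronglyMeasurable_left B stronglyMeasurable_condExp hfg_left hg
    _ = ∫ x, μ[fun y => B (f y) (μ[g | m] y) | m] x ∂μ := integral_congr_ae <|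
      (condExp_bilin_of_stronglyMeasurable_right B stronglyMeasurable_condExp hfg_right hf).symm
    _ = ∫ x, B (f x) (μ[g | m] x) ∂μ := integral_condExp hm

end CondExp

section WeightedCondExp

variable {X A : Type*} {m₀ : MeasurableSpace X} [NormedCommRing A] [NormedAlgebra ℝ A]

/-- The weighted conditional type operator `f ↦ w * μ[u * f | m]`, as a map on functions rather than
on an `L²` space, so that it needs no domain. -/
noncomputable def weightedCondExp (μ : Measure X) (m : MeasurableSpace X) (w u f : X → A) : X → A :=
  fun x => w x * μ[fun y => u y * f y | m] x

variable [CompleteSpace A] {μ : Measure X} {m : MeasurableSpace X}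

theorem weightedCondExp_star [StarRing A] [ContinuousStar A] [StarModule ℝ A] (w u f : X → A) :
    weightedCondExp μ m (star w) (star u) (star f) =ᵐ[μ] star (weightedCondExp μ m w u f) := by
  have star_weight_mul : (fun y => star u y * star f y) = star fun y => u y * f y :=
    (star_mul' u f).symm
  filter_upwards [condExp_star (μ := μ) (m := m) fun y => u y * f y] with x hx
  rw [Pi.star_apply, weightedCondExp, weightedCondExp, star_weight_mul, hx, star_mul']
  rfl

theorem integral_weightedCondExp_mul (hm : m ≤ m₀) [SigmaFinite (μ.trim hm)] {w u f g : X → A}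
    (huf : Integrable (fun x => u x * f x) μ) (hwg : Integrable (fun x => w x * g x) μ)
    (h_left : Integrable (fun x => weightedCondExp μ m w u f x * g x) μ)
    (h_right : Integrable (fun x => f x * weightedCondExp μ m u w g x) μ) :
    ∫ x, weightedCondExp μ m w u f x * g x ∂μ = ∫ x, f x * weightedCondExp μ m u w g x ∂μ := by
  have left_eq (x : X) : weightedCondExp μ m w u f x * g x =
      ContinuousLinearMap.mul ℝ A (μ[fun y => u y * f y | m] x) (w x * g x) := by
    simp only [weightedCondExp, ContinuousLinearMap.mul_apply']
    ring
  have right_eq (x : X) : f x * weightedCondExp μ m u w g x =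
      ContinuousLinearMap.mul ℝ A (u x * f x) (μ[fun y => w y * g y | m] x) := by
    simp only [weightedCondExp, ContinuousLinearMap.mul_apply']
    ring
  simp only [left_eq, right_eq] at h_left h_right ⊢
  exact integral_bilin_condExp_left_eq_right _ hm huf hwg h_left h_right

theorem WCT_adjoint_relation_general [StarRing A] [ContinuousStar A] [StarModule ℝ A]
    (hm : m ≤ m₀) [SigmaFinite (μ.trim hm)] {u w f g : X → A}
    (huf : Integrable (fun x => u x * f x) μ) (hwg : Integrable (fun x => star (w x) * g x) μ)
    (h_left : Integrable (fun x => weightedCondExp μ m w u f x * star (g x)) μ)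
    (h_right : Integrable (fun x => f x * star (weightedCondExp μ m (star u) (star w) g x)) μ) :
    ∫ x, weightedCondExp μ m w u f x * star (g x) ∂μ =
      ∫ x, f x * star (weightedCondExp μ m (star u) (star w) g x) ∂μ := by
  have hwg_star : Integrable (fun x => w x * star g x) μ := by
    simpa [Function.comp_def] using (starL' ℝ : A ≃L[ℝ] A).integrable_comp_iff.mpr hwg
  have star_adjoint : (fun x => f x * weightedCondExp μ m u w (star g) x) =ᵐ[μ]
      fun x => f x * star (weightedCondExp μ m (star u) (star w) g x) := by
    filter_upwards [weightedCondExp_star (star u) (star w) g] with x hx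
    rw [← Pi.star_apply, ← hx, star_star, star_star]
  exact (integral_weightedCondExp_mul hm huf hwg_star h_left
    (h_right.congr star_adjoint.symm)).trans (integral_congr_ae star_adjoint)

end WeightedCondExp

/-- Formal adjoint relation: `⟨T f, g⟩ = ⟨f, T* g⟩` where `T f = w·μ[u·f|𝒜]` and
`T* g = conj(u)·μ[conj(w)·g|𝒜]`. -/
theorem WCT_adjoint_relation
    {X : Type*} {m0 : MeasurableSpace X} (μ : Measure X) [SigmaFinite μ]
    (m : MeasurableSpace X) (hm : m ≤ m0) [SigmaFinite (μ.trim hm)]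
    (u w : X → ℂ) (hu : Measurable u) (hw : Measurable w)
    (hu2 : Integrable (fun x => ‖u x‖ ^ 2) μ)
    (hw2 : Integrable (fun x => ‖w x‖ ^ 2) μ)
    (f g : X → ℂ) (hf : MemLp f 2 μ) (hg : MemLp g 2 μ)
    (huf : Integrable (fun x => u x * f x) μ)
    (hwg : Integrable (fun x => (starRingEnd ℂ) (w x) * g x) μ)
    (hTf : MemLp (fun x => w x * (μ[fun y => u y * f y|m]) x) 2 μ)
    (hTg : MemLp (fun x =>
      (starRingEnd ℂ) (u x) * (μ[fun y => (starRingEnd ℂ) (w y) * g y|m]) x) 2 μ) :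
    ∫ x, (w x * (μ[fun y => u y * f y|m]) x) * (starRingEnd ℂ) (g x) ∂μ =
      ∫ x, f x * (starRingEnd ℂ)
        ((starRingEnd ℂ) (u x) * (μ[fun y => (starRingEnd ℂ) (w y) * g y|m]) x) ∂μ :=
  WCT_adjoint_relation_general hm huf hwg (hTf.integrable_mul hg.star) (hf.integrable_mul hTg.star)
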